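/- Let p be an odd prime and k an integer with 1 ≤ k < p/2. Then: (i) every A_{i,k} is an odd polynomial in F_p[T]; (ii) deg A_{i+1,k} = p·deg A_{i,k} − 2k for all i ≥ 0, and hence deg A_{i,k} = (p^i(p − 1 − 2k) + 2k)/(p − 1); (iii) if k = (p−1)/2 then A_{i,k} = T for all i ≥ 0. -/

import Mathlib

/-!
`A_{i+1}` is the quotient of `A_i ^ p` by the monic polynomial `P_k` of degree `2k`.
Oddness propagates because substituting `-T` in the Euclidean division of `A_i ^ p` (odd, as `p`
is odd) by `P_k` (even) gives another such division, so the quotient is odd by uniqueness.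
Degrees propagate since `deg A_i ≥ 1` gives `p * deg A_i > 2k`; the closed formula then follows by
induction. For `2k = p - 1` the degree is constantly `1`, and a monic odd polynomial of
degree `1` is `T`.
-/

noncomputable section
open Polynomial

def Tval (F : Type) [Field F] : LaurentSeries F :=
  (HahnSeries.single (1 : ℤ) (1 : F) : LaurentSeries F)⁻¹

def adeg {F : Type} [Field F] (α : LaurentSeries F) : ℤ := -α.order

def pEval {F : Type} [Field F] (f : Polynomial F) : LaurentSeries F :=
  f.eval₂ HahnSeries.C (Tval F)

def pEvalHom (F : Type) [Field F] : Polynomial F →+* LaurentSeries F :=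
  Polynomial.eval₂RingHom HahnSeries.C (Tval F)

/-- substitution `T ↦ v T` on Laurent series in `1/T`
(the underlying Hahn-series variable is `1/T`). -/
def scaleT {F : Type} [Field F] (v : F) (α : LaurentSeries F) : LaurentSeries F where
  coeff n := v ^ (-n) * α.coeff n
  isPWO_support' := α.isPWO_support'.mono (fun n hn => by
    simp only [Function.mem_support, ne_eq] at hn ⊢
    intro h; exact hn (by rw [h, mul_zero]))

/-- coefficient-wise map of Laurent series along a ring homomorphism. -/
def lsMap {F L : Type} [Field F] [Field L] (f : F →+* L) (α : LaurentSeries F) :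
    LaurentSeries L where
  coeff n := f (α.coeff n)
  isPWO_support' := α.isPWO_support'.mono (fun n hn => by
    simp only [Function.mem_support, ne_eq] at hn ⊢
    intro h; exact hn (by rw [h, map_zero]))

/-- integral (polynomial) part of a Laurent series in `1/T`. -/
def intPart {F : Type} [Field F] (α : LaurentSeries F) : Polynomial F :=
  ∑ j ∈ Finset.range ((-α.order).toNat + 1),
    Polynomial.C (α.coeff (-(j : ℤ))) * Polynomial.X ^ j

def IsCFOf {F : Type} [Field F] (α : LaurentSeries F) (a : ℕ → Polynomial F)
    (β : ℕ → LaurentSeries F) : Prop :=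
  β 1 = α ∧ ∀ n, 1 ≤ n →
    0 < (a n).degree ∧ 0 < adeg (β n) ∧ β n = pEval (a n) + (β (n + 1))⁻¹

def fcf {F : Type} [DivisionRing F] : List F → F
  | [] => 0
  | [c] => c
  | c :: d :: t => c + (fcf (d :: t))⁻¹

def fcfWD {F : Type} [DivisionRing F] : List F → Prop
  | [] => True
  | [_] => True
  | _ :: d :: t => fcf (d :: t) ≠ 0 ∧ fcfWD (d :: t)

def polyInt {F : Type} [Field F] (f : Polynomial F) : Polynomial F :=
  ∑ i ∈ Finset.range (f.natDegree + 1),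
    Polynomial.C (f.coeff i * ((i : F) + 1)⁻¹) * Polynomial.X ^ (i + 1)

def Pka {F : Type} [Field F] (k : ℕ) (a : F) : Polynomial F :=
  (Polynomial.X ^ 2 + Polynomial.C a) ^ k

def Qka {F : Type} [Field F] (k : ℕ) (a : F) : Polynomial F := polyInt (Pka (k - 1) a)

def Pk {F : Type} [Field F] (k : ℕ) : Polynomial F := (Polynomial.X ^ 2 - 1) ^ k

def Qk {F : Type} [Field F] (k : ℕ) : Polynomial F := polyInt (Pk (k - 1))

def Aseq (F : Type) [Field F] (p k : ℕ) : ℕ → Polynomial F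
  | 0 => Polynomial.X
  | i + 1 => Aseq F p k i ^ p / Pk k

def vseq (F : Type) [Field F] (k : ℕ) : ℕ → F
  | 0 => 1
  | 1 => 2 * k - 1
  | i + 1 =>
      (((2 * (k : ℤ) - 2 * i - 1) * (2 * (k : ℤ) - 2 * i + 1) : ℤ) : F) *
        (((i : F) * (2 * k - i))⁻¹) * (vseq F k i)⁻¹

def theta (F : Type) [Field F] (k : ℕ) : F :=
  (-1) ^ k * ∏ j ∈ Finset.Icc 1 k, (1 - (2 * (j : F))⁻¹)

def continuant {R : Type} [CommRing R] (a : ℕ → R) (c0 c1 : R) : ℕ → R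
  | 0 => c0
  | 1 => c1
  | n + 2 => a (n + 2) * continuant a c0 c1 (n + 1) + continuant a c0 c1 n

def largestPow (m N : ℕ) : ℕ := sSup {j : ℕ | m ^ j ∣ N}

def nu0 {F : Type} [Field F] (a : ℕ → Polynomial F) : ℝ :=
  Filter.limsup
    (fun n => ((a (n + 1)).natDegree : ℝ) / ∑ j ∈ Finset.Icc 1 n, ((a j).natDegree : ℝ))
    Filter.atTop

section Aux

variable {F : Type} [Field F]

lemma Pk_monic (k : ℕ) : (Pk k : F[X]).Monic := by
  have h : (X ^ 2 - 1 : F[X]).Monic := by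
    simpa using monic_X_pow_sub_C (1 : F) (n := 2) (by norm_num)
  exact h.pow k

lemma Pk_natDegree (k : ℕ) : (Pk k : F[X]).natDegree = 2 * k := by
  have h : (X ^ 2 - 1 : F[X]).natDegree = 2 := by
    simpa using natDegree_X_pow_sub_C (n := 2) (r := (1 : F))
  rw [Pk, natDegree_pow, h, mul_comm]

lemma Pk_comp_neg_X (k : ℕ) : (Pk k : F[X]).comp (-X) = Pk k := by
  simp [Pk]

/-- The quotient of an odd polynomial by an even monic polynomial is odd. -/
lemma div_comp_neg_X {f g : F[X]} (hg : g.Monic) (hf : f.comp (-X) = -f)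
    (hgc : g.comp (-X) = g) : (f / g).comp (-X) = -(f / g) := by
  rw [← divByMonic_eq_div f hg]
  have hdiv := modByMonic_add_div f g
  have hcomp := congrArg (fun q : F[X] => q.comp (-X)) hdiv
  simp only [add_comp, mul_comp, hgc, hf] at hcomp
  have hdeg : (-((f %ₘ g).comp (-X))).degree < g.degree := by
    rw [degree_neg, degree_comp_neg_X]
    exact degree_modByMonic_lt f hg
  have := (div_modByMonic_unique (f := f) (-((f /ₘ g).comp (-X)))
    (-((f %ₘ g).comp (-X))) hg ⟨by linear_combination -hcomp, hdeg⟩).1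
  rw [← neg_eq_iff_eq_neg]
  exact this.symm

lemma Aseq_comp_neg_X {p : ℕ} (hodd : Odd p) (k i : ℕ) :
    (Aseq F p k i).comp (-X) = -Aseq F p k i := by
  induction i with
  | zero => simp [Aseq]
  | succ i ih =>
    refine div_comp_neg_X (Pk_monic k) ?_ (Pk_comp_neg_X k)
    rw [pow_comp, ih, hodd.neg_pow]

/-- Monicity and positivity of the degree have to be carried together: the quotient of a monic
polynomial by `P_k` is monic only if the degree of the former is at least `2k`. -/
lemma Aseq_monic_and_natDegree_pos {p k : ℕ} (hk2 : 2 * k < p) (i : ℕ) :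
    (Aseq F p k i).Monic ∧ 1 ≤ (Aseq F p k i).natDegree := by
  induction i with
  | zero => simp [Aseq, monic_X]
  | succ i ih =>
    obtain ⟨hm, hd⟩ := ih
    have hlt : 2 * k < p * (Aseq F p k i).natDegree := hk2.trans_le (Nat.le_mul_of_pos_right p hd)
    rw [Aseq, ← divByMonic_eq_div _ (Pk_monic k)]
    constructor
    · rw [Monic, leadingCoeff_divByMonic_of_monic (Pk_monic k)]
      · exact hm.pow p
      · rw [degree_eq_natDegree (Pk_monic k).ne_zero, degree_eq_natDegree (hm.pow p).ne_zero,
          Nat.cast_le, Pk_natDegree, natDegree_pow]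
        exact hlt.le
    · rw [natDegree_divByMonic _ (Pk_monic k), natDegree_pow, Pk_natDegree]
      omega

lemma Aseq_natDegree_succ (p k i : ℕ) :
    (Aseq F p k (i + 1)).natDegree = p * (Aseq F p k i).natDegree - 2 * k := by
  rw [Aseq, ← divByMonic_eq_div _ (Pk_monic k), natDegree_divByMonic _ (Pk_monic k), natDegree_pow,
    Pk_natDegree]

lemma Aseq_natDegree_mul {p k : ℕ} (hk2 : 2 * k < p) (i : ℕ) :
    (Aseq F p k i).natDegree * (p - 1) = p ^ i * (p - 1 - 2 * k) + 2 * k := by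
  induction i with
  | zero => simp [Aseq]; omega
  | succ i ih =>
    have hd := (Aseq_monic_and_natDegree_pos (F := F) hk2 i).2
    have hlt : 2 * k ≤ p * (Aseq F p k i).natDegree :=
      hk2.le.trans (Nat.le_mul_of_pos_right p hd)
    have hp : 1 ≤ p := by omega
    have hkp : 2 * k ≤ p - 1 := by omega
    rw [Aseq_natDegree_succ]
    zify [hlt, hp, hkp] at ih ⊢
    linear_combination (p : ℤ) * ih

lemma coeff_eq_zero_of_comp_neg_X (h2 : (2 : F) ≠ 0) {f : F[X]} (hf : f.comp (-X) = -f)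
    {m : ℕ} (hm : Even m) : f.coeff m = 0 := by
  rw [show (-X : F[X]) = C (-1) * X by simp] at hf
  have h := congrArg (fun q : F[X] => q.coeff m) hf
  simp only [comp_C_mul_X_coeff, hm.neg_one_pow, coeff_neg, mul_one] at h
  have h' : 2 * f.coeff m = 0 := by linear_combination h
  exact (mul_eq_zero.mp h').resolve_left h2

end Aux

/-- For an odd prime `p` and `1 ≤ k < p/2`: (i) every `A_{i,k}` is an
odd polynomial; (ii) `deg A_{i+1,k} = p·deg A_{i,k} − 2k`, hence
`deg A_{i,k} = (p^i(p − 1 − 2k) + 2k)/(p − 1)`; (iii) if `k = (p−1)/2` then `A_{i,k} = T`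
for all `i`. -/
theorem stmt17 (p : ℕ) [Fact p.Prime] (hodd : Odd p) (k : ℕ) (hk : 1 ≤ k)
    (hk2 : 2 * k < p) :
    (∀ i, ∀ m : ℕ, Even m → (Aseq (ZMod p) p k i).coeff m = 0) ∧
    (∀ i, (Aseq (ZMod p) p k (i + 1)).natDegree
        = p * (Aseq (ZMod p) p k i).natDegree - 2 * k) ∧
    (∀ i, (Aseq (ZMod p) p k i).natDegree * (p - 1) = p ^ i * (p - 1 - 2 * k) + 2 * k) ∧
    (k = (p - 1) / 2 → ∀ i, Aseq (ZMod p) p k i = Polynomial.X) := by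
  have h2 : (2 : ZMod p) ≠ 0 := Ring.two_ne_zero (by
    rw [ZMod.ringChar_zmod_n]
    rintro rfl
    exact absurd hodd (by decide))
  have hcoeff : ∀ i, ∀ m : ℕ, Even m → (Aseq (ZMod p) p k i).coeff m = 0 := fun i m hm =>
    coeff_eq_zero_of_comp_neg_X h2 (Aseq_comp_neg_X hodd k i) hm
  refine ⟨hcoeff, Aseq_natDegree_succ p k, Aseq_natDegree_mul hk2, fun hkp i => ?_⟩
  have hkp' : 2 * k = p - 1 := by
    obtain ⟨r, hr⟩ := hodd
    omega
  have hdeg : (Aseq (ZMod p) p k i).natDegree = 1 := by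
    have h := Aseq_natDegree_mul (F := ZMod p) hk2 i
    rw [hkp', Nat.sub_self, mul_zero, zero_add] at h
    exact Nat.eq_of_mul_eq_mul_right (by omega) (h.trans (one_mul _).symm)
  have hmonic := (Aseq_monic_and_natDegree_pos (F := ZMod p) hk2 i).1
  rw [hmonic.eq_X_add_C hdeg, hcoeff i 0 (by simp), C_0, add_zero]
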